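/- arXiv:2510.25400 — 2 statements merged into one kernel-verified Lean document; each statement's English description precedes it below -/
import Mathlib

section
/- Let d ≥ 2 and λ_1, …, λ_d ≥ 0 be real numbers, and let Ñ_1, …, Ñ_d be independent random variables with Ñ_j ~ Poisson(λ_j/2). For λ ≥ 1 define R̃_λ = Σ_{j=1}^d (2λ_j²/λ) · 1{Ñ_j ≤ λ_j/4}. Then: (i) for any δ ∈ (0, e^{-2}), the probability that R̃_1 ≥ 33550 d + 33550 log²(1/δ) is at most δ; and (ii) for any δ ∈ (0, e^{-√d}], taking λ = log(1/δ)/√d, the probability that R̃_λ ≥ 91190 √d log(1/δ) is at most δ. -/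
open MeasureTheory ProbabilityTheory Finset
open scoped ENNReal

/-- Chernoff bound for the lower tail of a Poisson variable. -/
lemma poisson_lower_tail {Ω : Type*} [MeasurableSpace Ω] (μ : Measure Ω)
    (x : ℝ) (hx : 0 ≤ x) (N : Ω → ℕ)
    (hpois : ∀ k, μ {ω | N ω = k} =
      ENNReal.ofReal (Real.exp (-(x / 2)) * (x / 2) ^ k / k.factorial)) :
    μ {ω | (N ω : ℝ) ≤ x / 4} ≤ ENNReal.ofReal (Real.exp (-(3 / 40 * x))) := by
  set c : ℝ := Real.exp (Real.log 2 * (x / 4)) * Real.exp (-(x / 2)) with hc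
  have hsum : HasSum (fun n : ℕ => c * ((x / 4) ^ n / n.factorial)) (c * Real.exp (x / 4)) := by
    rw [Real.exp_eq_exp_ℝ]
    exact (NormedSpace.expSeries_div_hasSum_exp (x / 4)).mul_left c
  have hsub : {ω | (N ω : ℝ) ≤ x / 4} ⊆ ⋃ n : ℕ, {ω | N ω = n ∧ (n : ℝ) ≤ x / 4} := by
    intro ω hω
    simp only [Set.mem_iUnion, Set.mem_ofPred_eq] at hω ⊢
    exact ⟨N ω, rfl, hω⟩
  have hterm : ∀ n : ℕ, μ {ω | N ω = n ∧ (n : ℝ) ≤ x / 4} ≤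
      ENNReal.ofReal (c * ((x / 4) ^ n / n.factorial)) := by
    intro n
    by_cases hn : (n : ℝ) ≤ x / 4
    · simp only [hn, and_true]
      rw [hpois n]
      apply ENNReal.ofReal_le_ofReal
      have h2 : (2 : ℝ) ^ n ≤ Real.exp (Real.log 2 * (x / 4)) := by
        calc (2 : ℝ) ^ n = Real.exp (Real.log 2 * n) := by
              rw [Real.exp_mul, Real.exp_log (by norm_num), Real.rpow_natCast]
          _ ≤ _ := by
              apply Real.exp_le_exp.2
              exact mul_le_mul_of_nonneg_left hn (Real.log_nonneg (by norm_num))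
      have h3 : (x / 2) ^ n = 2 ^ n * (x / 4) ^ n := by
        rw [← mul_pow]; congr 1; ring
      rw [h3, hc]
      calc Real.exp (-(x / 2)) * (2 ^ n * (x / 4) ^ n) / n.factorial
          = 2 ^ n * (Real.exp (-(x / 2)) * ((x / 4) ^ n / n.factorial)) := by ring
        _ ≤ Real.exp (Real.log 2 * (x / 4)) *
            (Real.exp (-(x / 2)) * ((x / 4) ^ n / n.factorial)) := by
            apply mul_le_mul_of_nonneg_right h2; positivity
        _ = _ := by ring
    · simp [hn]
  calc μ {ω | (N ω : ℝ) ≤ x / 4} ≤ ∑' n : ℕ, μ {ω | N ω = n ∧ (n : ℝ) ≤ x / 4} :=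
        (measure_mono hsub).trans (measure_iUnion_le _)
    _ ≤ ∑' n : ℕ, ENNReal.ofReal (c * ((x / 4) ^ n / n.factorial)) :=
        ENNReal.tsum_le_tsum hterm
    _ = ENNReal.ofReal (c * Real.exp (x / 4)) := by
        rw [← ENNReal.ofReal_tsum_of_nonneg _ hsum.summable, hsum.tsum_eq]
        intro n; positivity
    _ ≤ _ := by
        apply ENNReal.ofReal_le_ofReal
        rw [hc, ← Real.exp_add, ← Real.exp_add]
        apply Real.exp_le_exp.2
        nlinarith [Real.log_two_lt_d9]

/-- Increment of the square root. -/
lemma sqrt_increment (R B x : ℝ) (hR : 0 < R) (hB : R ^ 2 ≤ B) (hx : 0 ≤ x) :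
    Real.sqrt (B + x ^ 2) ≤ Real.sqrt B + min x (x ^ 2 / (2 * R)) := by
  have hB0 : 0 ≤ B := (sq_nonneg R).trans hB
  have hs : R ≤ Real.sqrt B := Real.le_sqrt_of_sq_le hB
  have hq := Real.sq_sqrt hB0
  rw [← min_add_add_left]
  apply le_min
  · apply Real.sqrt_le_iff.2
    constructor
    · positivity
    · nlinarith [mul_nonneg (Real.sqrt_nonneg B) hx]
  · apply Real.sqrt_le_iff.2
    constructor
    · positivity
    · have h1 : x ^ 2 = 2 * R * (x ^ 2 / (2 * R)) := by field_simp
      have h2 : 0 ≤ x ^ 2 / (2 * R) := by positivity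
      generalize x ^ 2 / (2 * R) = z at h1 h2
      rw [h1]
      nlinarith [mul_le_mul_of_nonneg_right hs h2, sq_nonneg z]

lemma sqrt_sum_bound {ι : Type*} (s : Finset ι) (R : ℝ) (hR : 0 < R) (x : ι → ℝ)
    (hx : ∀ i, 0 ≤ x i) (P : ι → Prop) [DecidablePred P] :
    Real.sqrt (R ^ 2 + ∑ i ∈ s, x i ^ 2 * (if P i then 1 else 0)) ≤
      R + ∑ i ∈ s, (if P i then min (x i) (x i ^ 2 / (2 * R)) else 0) := by
  classical
  induction s using Finset.induction_on with
  | empty => simp [Real.sqrt_sq hR.le]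
  | insert a s ha ih =>
    rw [sum_insert ha, sum_insert ha]
    by_cases hP : P a
    · simp only [hP, if_true, mul_one]
      have h0 : 0 ≤ ∑ i ∈ s, x i ^ 2 * (if P i then (1 : ℝ) else 0) :=
        sum_nonneg fun i _ => by split_ifs <;> positivity
      have := sqrt_increment R (R ^ 2 + ∑ i ∈ s, x i ^ 2 * (if P i then 1 else 0)) (x a) hR
        (by linarith) (hx a)
      rw [show R ^ 2 + (x a ^ 2 + ∑ i ∈ s, x i ^ 2 * (if P i then (1 : ℝ) else 0)) =
        R ^ 2 + ∑ i ∈ s, x i ^ 2 * (if P i then (1 : ℝ) else 0) + x a ^ 2 by ring]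
      linarith
    · simpa [hP] using ih

/-- The one-coordinate exponential moment estimate. -/
lemma one_coord_real (D x : ℝ) (hD : 0 < D) (hx : 0 ≤ x) :
    (Real.exp (3 / 80 * min x (x ^ 2 / (2 * (80 / 3 * D)))) - 1) * Real.exp (-(3 / 40 * x))
      ≤ 1 / D := by
  set a := 3 / 80 * min x (x ^ 2 / (2 * (80 / 3 * D))) with ha
  have h0 : 0 ≤ a := by
    rw [ha]; exact mul_nonneg (by norm_num) (le_min hx (by positivity))
  have h1 : a ≤ 3 / 80 * x := by
    rw [ha]; exact mul_le_mul_of_nonneg_left (min_le_left _ _) (by norm_num)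
  have h2 : a ≤ 9 / 12800 * x ^ 2 / D := by
    calc a ≤ 3 / 80 * (x ^ 2 / (2 * (80 / 3 * D))) :=
          mul_le_mul_of_nonneg_left (min_le_right _ _) (by norm_num)
      _ = _ := by field_simp; ring
  have h3 : Real.exp a - 1 ≤ a * Real.exp a := by
    have := Real.add_one_le_exp (-a)
    have h := mul_le_mul_of_nonneg_right this (Real.exp_pos a).le
    rw [← Real.exp_add] at h
    simp at h
    linarith
  have h4 : Real.exp a - 1 ≤ 9 / 12800 * x ^ 2 / D * Real.exp (3 / 80 * x) :=
    h3.trans (mul_le_mul h2 (Real.exp_le_exp.2 h1) (Real.exp_pos _).le (h0.trans h2))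
  have h5 : (3 / 80 * x) ^ 2 / 2 ≤ Real.exp (3 / 80 * x) := by
    have := Real.quadratic_le_exp_of_nonneg (x := 3 / 80 * x) (by positivity)
    nlinarith
  calc (Real.exp a - 1) * Real.exp (-(3 / 40 * x))
      ≤ 9 / 12800 * x ^ 2 / D * Real.exp (3 / 80 * x) * Real.exp (-(3 / 40 * x)) :=
        mul_le_mul_of_nonneg_right h4 (Real.exp_pos _).le
    _ = ((3 / 80 * x) ^ 2 / 2) * Real.exp (-(3 / 80 * x)) * (1 / D) := by
        rw [mul_assoc, ← Real.exp_add]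
        rw [show 3 / 80 * x + -(3 / 40 * x) = -(3 / 80 * x) by ring]
        ring
    _ ≤ Real.exp (3 / 80 * x) * Real.exp (-(3 / 80 * x)) * (1 / D) := by
        gcongr
    _ = 1 / D := by
        rw [← Real.exp_add]; simp

lemma main_tail {Ω : Type*} [MeasurableSpace Ω]
    (μ : Measure Ω) [IsProbabilityMeasure μ]
    (d : ℕ) (hd : 2 ≤ d)
    (lamj : Fin d → ℝ) (hlamj : ∀ j, 0 ≤ lamj j)
    (N : Fin d → Ω → ℕ) (hmeas : ∀ j, Measurable (N j))
    (hindep : iIndepFun N μ)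
    (hpois : ∀ j k, μ {ω | N j ω = k} =
      ENNReal.ofReal (Real.exp (-(lamj j / 2)) * (lamj j / 2) ^ k / k.factorial))
    (t L : ℝ) (hL : 0 ≤ L) (ht : (2 * Real.sqrt d + L) ^ 2 ≤ 9 / 6400 * t) :
    μ {ω | t ≤ ∑ j, lamj j ^ 2 * (if (N j ω : ℝ) ≤ lamj j / 4 then 1 else 0)} ≤
      ENNReal.ofReal (Real.exp (-L)) := by
  set D := Real.sqrt d with hDdef
  have hdpos : (0 : ℝ) < d := by exact_mod_cast (by omega : 0 < d)
  have hD : 0 < D := Real.sqrt_pos.2 hdpos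
  have hDD : D * D = d := Real.mul_self_sqrt hdpos.le
  set R := 80 / 3 * D with hR
  have hRpos : 0 < R := by positivity
  set a : Fin d → ℝ := fun j => 3 / 80 * min (lamj j) (lamj j ^ 2 / (2 * R)) with ha
  have ha0 : ∀ j, 0 ≤ a j := fun j =>
    mul_nonneg (by norm_num) (le_min (hlamj j) (by positivity))
  set g : Fin d → ℕ → ℝ≥0∞ := fun j n =>
    ENNReal.ofReal (Real.exp (if (n : ℝ) ≤ lamj j / 4 then a j else 0)) with hg
  have hX : iIndepFun (fun j => g j ∘ N j) μ :=
    hindep.comp g (fun j => measurable_of_countable _)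
  have hXm : ∀ j, Measurable (g j ∘ N j) := fun j =>
    (measurable_of_countable (g j)).comp (hmeas j)
  have hone : ∀ j, ∫⁻ ω, (g j ∘ N j) ω ∂μ ≤ ENNReal.ofReal (Real.exp (1 / D)) := by
    intro j
    have hA : MeasurableSet {ω | (N j ω : ℝ) ≤ lamj j / 4} :=
      (hmeas j) (t := {n : ℕ | (n : ℝ) ≤ lamj j / 4}) (MeasurableSet.of_discrete)
    have he : 0 ≤ Real.exp (a j) - 1 := by linarith [Real.one_le_exp (ha0 j)]
    calc ∫⁻ ω, (g j ∘ N j) ω ∂μ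
        ≤ ∫⁻ ω, (1 + {ω | (N j ω : ℝ) ≤ lamj j / 4}.indicator
            (fun _ => ENNReal.ofReal (Real.exp (a j) - 1)) ω) ∂μ := by
          apply lintegral_mono
          intro ω
          by_cases h : (N j ω : ℝ) ≤ lamj j / 4
          · simp only [hg, Function.comp, h, if_true, Set.indicator, Set.mem_ofPred_eq]
            rw [← ENNReal.ofReal_one, ← ENNReal.ofReal_add zero_le_one he]
            apply ENNReal.ofReal_le_ofReal; linarith
          · simp [hg, h]
      _ = 1 + ENNReal.ofReal (Real.exp (a j) - 1) * μ {ω | (N j ω : ℝ) ≤ lamj j / 4} := by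
          rw [lintegral_add_left measurable_const, lintegral_indicator_const hA]; simp
      _ ≤ 1 + ENNReal.ofReal (Real.exp (a j) - 1) *
            ENNReal.ofReal (Real.exp (-(3 / 40 * lamj j))) := by
          gcongr
          exact poisson_lower_tail μ (lamj j) (hlamj j) (N j) (hpois j)
      _ ≤ 1 + ENNReal.ofReal (1 / D) := by
          rw [← ENNReal.ofReal_mul he]
          gcongr
          exact one_coord_real D (lamj j) hD (hlamj j)
      _ ≤ _ := by
          rw [← ENNReal.ofReal_one, ← ENNReal.ofReal_add zero_le_one (by positivity)]
          apply ENNReal.ofReal_le_ofReal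
          linarith [Real.add_one_le_exp (1 / D)]
  have hprod : ∫⁻ ω, ∏ j, (g j ∘ N j) ω ∂μ ≤ ENNReal.ofReal (Real.exp D) := by
    rw [lintegral_prod_eq_prod_lintegral_of_indepFun univ _ hX hXm]
    refine (Finset.prod_le_prod' fun j _ => hone j).trans ?_
    rw [prod_const, card_univ, Fintype.card_fin, ← ENNReal.ofReal_pow (Real.exp_pos _).le,
      ← Real.exp_nat_mul, ← hDD]
    apply le_of_eq
    congr 2
    field_simp
  have hsub : {ω | t ≤ ∑ j, lamj j ^ 2 * (if (N j ω : ℝ) ≤ lamj j / 4 then 1 else 0)} ⊆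
      {ω | ENNReal.ofReal (Real.exp (D + L)) ≤ ∏ j, (g j ∘ N j) ω} := by
    intro ω hω
    simp only [Set.mem_ofPred_eq] at hω ⊢
    simp only [hg, Function.comp]
    rw [← ENNReal.ofReal_prod_of_nonneg (fun j _ => (Real.exp_pos _).le), ← Real.exp_sum]
    apply ENNReal.ofReal_le_ofReal
    apply Real.exp_le_exp.2
    have hb := sqrt_sum_bound univ R hRpos lamj hlamj (fun j => (N j ω : ℝ) ≤ lamj j / 4)
    have hs : 80 / 3 * (2 * D + L) ≤ Real.sqrt
        (R ^ 2 + ∑ j, lamj j ^ 2 * (if (N j ω : ℝ) ≤ lamj j / 4 then 1 else 0)) := by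
      apply Real.le_sqrt_of_sq_le
      nlinarith [sq_nonneg R]
    have heq : ∑ j, (if (N j ω : ℝ) ≤ lamj j / 4 then a j else 0) =
        3 / 80 * ∑ j, (if (N j ω : ℝ) ≤ lamj j / 4 then
          min (lamj j) (lamj j ^ 2 / (2 * R)) else 0) := by
      rw [mul_sum]
      refine sum_congr rfl fun j _ => ?_
      split_ifs <;> simp [ha]
    rw [heq]
    linarith
  have hmark := mul_meas_ge_le_lintegral (μ := μ) (f := fun ω => ∏ j, (g j ∘ N j) ω)
    (Finset.measurable_fun_prod _ fun j _ => hXm j) (ENNReal.ofReal (Real.exp (D + L)))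
  have hfin : ENNReal.ofReal (Real.exp (D + L)) *
      μ {ω | t ≤ ∑ j, lamj j ^ 2 * (if (N j ω : ℝ) ≤ lamj j / 4 then 1 else 0)} ≤
      ENNReal.ofReal (Real.exp (D + L)) * ENNReal.ofReal (Real.exp (-L)) := by
    rw [← ENNReal.ofReal_mul (Real.exp_pos _).le, ← Real.exp_add,
      show D + L + -L = D by ring]
    exact (mul_le_mul_right (measure_mono hsub) _).trans (hmark.trans hprod)
  exact (ENNReal.mul_le_mul_iff_right (by simp [Real.exp_pos]) (by simp)).1 hfin

theorem tail_residual_poisson {Ω : Type*} [MeasurableSpace Ω]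
    (μ : Measure Ω) [IsProbabilityMeasure μ]
    (d : ℕ) (hd : 2 ≤ d)
    (lamj : Fin d → ℝ) (hlamj : ∀ j, 0 ≤ lamj j)
    (N : Fin d → Ω → ℕ) (hmeas : ∀ j, Measurable (N j))
    (hindep : iIndepFun N μ)
    (hpois : ∀ j k, μ {ω | N j ω = k} =
      ENNReal.ofReal (Real.exp (-(lamj j / 2)) * (lamj j / 2) ^ k / k.factorial)) :
    (∀ δ : ℝ, 0 < δ → δ < Real.exp (-2) →
      μ {ω | 33550 * d + 33550 * Real.log (1 / δ) ^ 2 ≤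
          ∑ j, (2 * lamj j ^ 2 / 1) * (if (N j ω : ℝ) ≤ lamj j / 4 then 1 else 0)} ≤
        ENNReal.ofReal δ) ∧
    (∀ δ : ℝ, 0 < δ → δ ≤ Real.exp (-Real.sqrt d) →
      μ {ω | 91190 * Real.sqrt d * Real.log (1 / δ) ≤
          ∑ j, (2 * lamj j ^ 2 / (Real.log (1 / δ) / Real.sqrt d)) *
            (if (N j ω : ℝ) ≤ lamj j / 4 then 1 else 0)} ≤
        ENNReal.ofReal δ) := by
  constructor
  · intro δ h0 h1
    have hlog : Real.log (1 / δ) = -Real.log δ := by rw [one_div, Real.log_inv]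
    have hL : 2 ≤ Real.log (1 / δ) := by
      have := Real.log_lt_log h0 h1
      rw [Real.log_exp] at this
      linarith
    have hexp : Real.exp (-Real.log (1 / δ)) = δ := by rw [hlog, neg_neg, Real.exp_log h0]
    set L := Real.log (1 / δ) with hLdef
    have hs : Real.sqrt d ^ 2 = d := Real.sq_sqrt (Nat.cast_nonneg d)
    have key := main_tail μ d hd lamj hlamj N hmeas hindep hpois
      (16775 * d + 16775 * L ^ 2) L (by linarith)
      (by nlinarith [sq_nonneg (Real.sqrt d - 2 * L)])
    rw [hexp] at key
    refine (measure_mono ?_).trans key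
    intro ω hω
    simp only [Set.mem_ofPred_eq] at hω ⊢
    have heq : ∑ j, (2 * lamj j ^ 2 / 1) * (if (N j ω : ℝ) ≤ lamj j / 4 then (1 : ℝ) else 0) =
        2 * ∑ j, lamj j ^ 2 * (if (N j ω : ℝ) ≤ lamj j / 4 then (1 : ℝ) else 0) := by
      rw [mul_sum]
      refine sum_congr rfl fun j _ => ?_
      ring
    rw [heq] at hω
    linarith
  · intro δ h0 h1
    have hlog : Real.log (1 / δ) = -Real.log δ := by rw [one_div, Real.log_inv]
    have hL : Real.sqrt d ≤ Real.log (1 / δ) := by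
      have := Real.log_le_log h0 h1
      rw [Real.log_exp] at this
      linarith
    have hexp : Real.exp (-Real.log (1 / δ)) = δ := by rw [hlog, neg_neg, Real.exp_log h0]
    set L := Real.log (1 / δ) with hLdef
    have hdpos : (0 : ℝ) < d := by exact_mod_cast (by omega : 0 < d)
    have hD : 0 < Real.sqrt d := Real.sqrt_pos.2 hdpos
    have hLpos : 0 < L := hD.trans_le hL
    have key := main_tail μ d hd lamj hlamj N hmeas hindep hpois
      (45595 * L ^ 2) L hLpos.le
      (by nlinarith [mul_le_mul hL hL hD.le hLpos.le])
    rw [hexp] at key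
    refine (measure_mono ?_).trans key
    intro ω hω
    simp only [Set.mem_ofPred_eq] at hω ⊢
    have heq : ∑ j, (2 * lamj j ^ 2 / (L / Real.sqrt d)) *
          (if (N j ω : ℝ) ≤ lamj j / 4 then (1 : ℝ) else 0) =
        2 * Real.sqrt d / L *
          ∑ j, lamj j ^ 2 * (if (N j ω : ℝ) ≤ lamj j / 4 then (1 : ℝ) else 0) := by
      rw [mul_sum]
      refine sum_congr rfl fun j _ => ?_
      field_simp
    rw [heq] at hω
    refine le_of_mul_le_mul_left ?_ (show 0 < 2 * Real.sqrt d / L by positivity)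
    refine le_trans (le_of_eq ?_) hω
    field_simp
    norm_num
end

section
/- (Latała's moment inequality.) Let Z, Z_1, …, Z_m be i.i.d. nonnegative random variables. Then for any real p ∈ [1, ∞), the L^p norm of the sum satisfies ‖Σ_{i=1}^m Z_i‖_p ≤ 2e² · sup{ (p/s)·(m/p)^{1/s}·‖Z‖_s : max(1, p/m) ≤ s ≤ p }. -/
open MeasureTheory ProbabilityTheory Finset
open scoped ENNReal

/-- The `L^p` norm `‖Z‖_p = (E[|Z|^p])^{1/p} ∈ [0, +∞]` of a real random variable,
for a real exponent `p`. -/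
noncomputable def lpNormR {Ω : Type*} [MeasurableSpace Ω] (μ : Measure Ω) (p : ℝ)
    (Z : Ω → ℝ) : ℝ≥0∞ :=
  (∫⁻ ω, ENNReal.ofReal (|Z ω| ^ p) ∂μ) ^ (1 / p)

lemma latala_taylor (n : ℕ) : ∀ (p x : ℝ), (n : ℝ) < p → p ≤ n + 1 → 0 ≤ x →
    (1 + x) ^ p ≤ ∑ k ∈ range (n + 1), p ^ k / (k.factorial : ℝ) * x ^ k + x ^ p := by
  induction n with
  | zero =>
    intro p x h0 h1 hx
    simp only [Nat.cast_zero, zero_add] at h0 h1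
    have h := NNReal.rpow_add_le_add_rpow (p := p) 1 ⟨x, hx⟩ h0.le h1
    have h2 : ((1 + x) ^ p : ℝ) ≤ 1 ^ p + x ^ p := by exact_mod_cast h
    simpa using h2
  | succ n ih =>
    intro p x h0 h1 hx
    push_cast at h0 h1
    have hn : (0 : ℝ) ≤ n := Nat.cast_nonneg n
    have hp1 : 1 < p := by linarith
    have key : ∀ u : ℝ, ∑ k ∈ range (n + 1 + 1), p ^ k / (k.factorial : ℝ) * u ^ k
        = ∑ k ∈ range (n + 1), p ^ (k + 1) / ((k + 1).factorial : ℝ) * u ^ (k + 1) + 1 := by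
      intro u
      rw [Finset.sum_range_succ']
      simp
    have hd1 : ∀ u : ℝ, 0 ≤ u → HasDerivAt (fun u : ℝ => (1 + u) ^ p) (p * (1 + u) ^ (p - 1)) u := by
      intro u hu
      have h := ((hasDerivAt_id u).const_add 1).rpow_const (p := p) (Or.inr hp1.le)
      simpa using h
    have hd2 : ∀ u : ℝ, 0 ≤ u → HasDerivAt (fun u : ℝ => ∑ k ∈ range (n + 1 + 1), p ^ k / (k.factorial : ℝ) * u ^ k + u ^ p)
        (∑ k ∈ range (n + 1), p ^ (k + 1) / ((k + 1).factorial : ℝ) * (((k + 1 : ℕ) : ℝ) * u ^ k) + p * u ^ (p - 1)) u := by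
      intro u hu
      simp_rw [key]
      refine HasDerivAt.add ?_ (Real.hasDerivAt_rpow_const (Or.inr hp1.le))
      refine HasDerivAt.add_const _ ?_
      refine HasDerivAt.fun_sum fun k _ => ?_
      have := (hasDerivAt_pow (k + 1) u).const_mul (p ^ (k + 1) / ((k + 1).factorial : ℝ))
      simpa using this
    refine image_le_of_deriv_right_le_deriv_boundary (a := 0) (b := x)
      (f := fun u : ℝ => (1 + u) ^ p) (f' := fun u => p * (1 + u) ^ (p - 1))
      (B := fun u : ℝ => ∑ k ∈ range (n + 1 + 1), p ^ k / (k.factorial : ℝ) * u ^ k + u ^ p)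
      (B' := fun u => ∑ k ∈ range (n + 1), p ^ (k + 1) / ((k + 1).factorial : ℝ) * (((k + 1 : ℕ) : ℝ) * u ^ k) + p * u ^ (p - 1))
      ?_ ?_ ?_ ?_ ?_ ?_ (Set.right_mem_Icc.2 hx)
    · exact fun u hu => (hd1 u hu.1).continuousAt.continuousWithinAt
    · exact fun u hu => (hd1 u hu.1).hasDerivWithinAt
    · simp only [key]
      simp [Real.zero_rpow (by linarith : p ≠ 0)]
    · exact fun u hu => (hd2 u hu.1).continuousAt.continuousWithinAt
    · exact fun u hu => (hd2 u hu.1).hasDerivWithinAt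
    · intro u hu
      have hu0 := hu.1
      have h := ih (p - 1) u (by linarith) (by linarith) hu.1
      have h3 : ∑ k ∈ range (n + 1), (p - 1) ^ k / (k.factorial : ℝ) * u ^ k ≤
          ∑ k ∈ range (n + 1), p ^ k / (k.factorial : ℝ) * u ^ k := by
        refine Finset.sum_le_sum fun k _ => ?_
        have : (p - 1) ^ k ≤ p ^ k := pow_le_pow_left₀ (by linarith) (by linarith) k
        gcongr
      have h4 : ∑ k ∈ range (n + 1), p ^ (k + 1) / ((k + 1).factorial : ℝ) * (((k + 1 : ℕ) : ℝ) * u ^ k)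
          = p * ∑ k ∈ range (n + 1), p ^ k / (k.factorial : ℝ) * u ^ k := by
        rw [Finset.mul_sum]
        refine Finset.sum_congr rfl fun k _ => ?_
        have : (k.factorial : ℝ) ≠ 0 := by positivity
        rw [Nat.factorial_succ]
        push_cast
        field_simp
        ring
      simp only [h4, ← mul_add]
      exact mul_le_mul_of_nonneg_left (by linarith) (by linarith)

lemma latala_exp (r : ℝ) (hr : 1 ≤ r) : Real.exp (r / 2) + r ≤ Real.exp r := by
  have h := Real.quadratic_le_exp_of_nonneg (x := r / 2) (by linarith)
  have h2 : Real.exp r = Real.exp (r / 2) * Real.exp (r / 2) := by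
    rw [← Real.exp_add]; ring_nf
  rw [h2]
  set y := Real.exp (r / 2)
  have h3 : (1 + r / 2 + (r / 2) ^ 2 / 2) * (r / 2 + (r / 2) ^ 2 / 2) ≤ y * (y - 1) := by
    apply mul_le_mul h (by linarith) (by positivity) (by linarith [sq_nonneg (r/2)])
  have h4 : r ≤ r ^ 2 := by nlinarith
  have h5 : r ≤ r ^ 3 := by nlinarith
  have h6 : r ≤ r ^ 4 := by nlinarith
  nlinarith

lemma latala_jensen {Ω : Type*} [MeasurableSpace Ω] (μ : Measure Ω) [IsProbabilityMeasure μ]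
    (X : Ω → ℝ) (hX : Measurable X) (hX0 : ∀ ω, 0 ≤ X ω) (s r c : ℝ) (hs : 0 < s) (hsr : s ≤ r)
    (hc : 0 ≤ c) (h : ∫⁻ ω, ENNReal.ofReal (X ω ^ r) ∂μ ≤ ENNReal.ofReal (c ^ r)) :
    ∫⁻ ω, ENNReal.ofReal (X ω ^ s) ∂μ ≤ ENNReal.ofReal (c ^ s) := by
  have h1 := eLpNorm'_le_eLpNorm'_of_exponent_le hs hsr μ (f := X) hX.aestronglyMeasurable
  have hr : 0 < r := hs.trans_le hsr
  have key : ∀ q : ℝ, 0 < q → ∀ ω, ‖X ω‖ₑ ^ q = ENNReal.ofReal (X ω ^ q) := by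
    intro q hq ω
    rw [Real.enorm_of_nonneg (hX0 ω), ENNReal.ofReal_rpow_of_nonneg (hX0 ω) hq.le]
  simp only [eLpNorm', key s hs, key r hr] at h1
  rw [← ENNReal.ofReal_rpow_of_nonneg hc hr.le] at h
  rw [← ENNReal.ofReal_rpow_of_nonneg hc hs.le]
  have h2 : (∫⁻ ω, ENNReal.ofReal (X ω ^ r) ∂μ) ^ (1 / r) ≤ ENNReal.ofReal c := by
    rw [one_div]
    exact (ENNReal.rpow_inv_le_iff hr).2 h
  have h3 := h1.trans h2
  rw [one_div] at h3
  exact (ENNReal.rpow_inv_le_iff hs).1 h3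

lemma latala_coeff {Ω : Type*} [MeasurableSpace Ω] (μ : Measure Ω) [IsProbabilityMeasure μ]
    (X : Ω → ℝ) (hX : Measurable X) (hX0 : ∀ ω, 0 ≤ X ω) (p r : ℝ) (hp : 1 ≤ p) (hr : 0 < r)
    (hrp : r ≤ p)
    (H : ∀ s, 1 ≤ s → r ≤ s → s ≤ p → ∫⁻ ω, ENNReal.ofReal (X ω ^ s) ∂μ ≤
      ENNReal.ofReal ((s / (2 * Real.exp 1 * p)) ^ s * r))
    (k : ℕ) (hk : 1 ≤ k) (hkp : (k : ℝ) ≤ p) :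
    ∫⁻ ω, ENNReal.ofReal (p ^ k / (k.factorial : ℝ) * X ω ^ k) ∂μ ≤
      ENNReal.ofReal (r / 2 ^ k + (if r ≤ 1 then 0 else (r / 2) ^ k / (k.factorial : ℝ))) := by
  have hp0 : 0 < p := by linarith
  have hk1 : (1 : ℝ) ≤ k := by exact_mod_cast hk
  have hc : 0 ≤ p ^ k / (k.factorial : ℝ) := by positivity
  have hfac : (0 : ℝ) < k.factorial := by positivity
  simp_rw [ENNReal.ofReal_mul hc]
  rw [lintegral_const_mul _ (by fun_prop)]
  by_cases hrk : r ≤ k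
  · have h := H k hk1 hrk hkp
    simp only [Real.rpow_natCast] at h
    refine (mul_le_mul_right h _).trans ?_
    rw [← ENNReal.ofReal_mul hc]
    apply ENNReal.ofReal_le_ofReal
    have h1 : p ^ k / (k.factorial : ℝ) * (((k : ℝ) / (2 * Real.exp 1 * p)) ^ k * r)
        = ((k : ℝ) ^ k / k.factorial) / Real.exp k * (r / 2 ^ k) := by
      have : Real.exp (k : ℝ) = Real.exp 1 ^ k := by rw [← Real.exp_nat_mul]; simp
      rw [this, div_pow, mul_pow, mul_pow]
      have := (Real.exp_pos 1).ne'
      field_simp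
    have h2 : ((k : ℝ) ^ k / k.factorial) / Real.exp k ≤ 1 := by
      rw [div_le_one (Real.exp_pos _)]
      exact Real.pow_div_factorial_le_exp (k : ℝ) (by positivity) k
    have h3 : 0 ≤ (if r ≤ 1 then 0 else (r / 2) ^ k / (k.factorial : ℝ)) := by
      split_ifs <;> positivity
    rw [h1]
    have : ((k : ℝ) ^ k / k.factorial) / Real.exp k * (r / 2 ^ k) ≤ 1 * (r / 2 ^ k) := by
      gcongr
    linarith
  · push Not at hrk
    have hr1 : 1 < r := by linarith
    have h := H r hr1.le le_rfl hrp
    have h1 : (r / (2 * Real.exp 1 * p)) ^ r * r ≤ (r / (2 * p)) ^ r := by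
      have e1 : r / (2 * p) = r / (2 * Real.exp 1 * p) * Real.exp 1 := by
        have := (Real.exp_pos 1).ne'
        field_simp
      rw [e1, Real.mul_rpow (by positivity) (by positivity), ← Real.exp_mul, one_mul]
      have : r ≤ Real.exp r := by linarith [Real.add_one_le_exp r]
      gcongr
    have h2 := latala_jensen μ X hX hX0 k r (r / (2 * p)) (by linarith) hrk.le (by positivity)
      (h.trans (ENNReal.ofReal_le_ofReal h1))
    simp only [Real.rpow_natCast] at h2
    refine (mul_le_mul_right h2 _).trans ?_
    rw [← ENNReal.ofReal_mul hc]
    apply ENNReal.ofReal_le_ofReal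
    rw [if_neg (by linarith)]
    have h3 : p ^ k / (k.factorial : ℝ) * (r / (2 * p)) ^ k = (r / 2) ^ k / (k.factorial : ℝ) := by
      rw [div_pow, div_pow, mul_pow]
      field_simp
    rw [h3]
    have : 0 ≤ r / 2 ^ k := by positivity
    linarith

lemma latala_onevar {Ω : Type*} [MeasurableSpace Ω] (μ : Measure Ω) [IsProbabilityMeasure μ]
    (X : Ω → ℝ) (hX : Measurable X) (hX0 : ∀ ω, 0 ≤ X ω) (p r : ℝ) (hp : 1 ≤ p) (hr : 0 < r)
    (hrp : r ≤ p)
    (H : ∀ s, 1 ≤ s → r ≤ s → s ≤ p → ∫⁻ ω, ENNReal.ofReal (X ω ^ s) ∂μ ≤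
      ENNReal.ofReal ((s / (2 * Real.exp 1 * p)) ^ s * r)) :
    ∫⁻ ω, ENNReal.ofReal ((1 + X ω) ^ p) ∂μ ≤ ENNReal.ofReal (Real.exp r) := by
  have hp0 : 0 < p := by linarith
  obtain ⟨n, hn1, hn2⟩ : ∃ n : ℕ, (n : ℝ) < p ∧ p ≤ n + 1 := by
    have h1 : 1 ≤ ⌈p⌉₊ := Nat.one_le_iff_ne_zero.2 (Nat.ceil_pos.2 hp0).ne'
    refine ⟨⌈p⌉₊ - 1, ?_, ?_⟩
    · rw [Nat.cast_sub h1]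
      have := Nat.ceil_lt_add_one hp0.le
      push_cast; linarith
    · rw [Nat.cast_sub h1]
      have := Nat.le_ceil p
      push_cast; linarith
  set a : ℕ → ℝ := fun k => r / 2 ^ k + (if r ≤ 1 then 0 else (r / 2) ^ k / (k.factorial : ℝ)) with ha
  have ha0 : ∀ k, 0 ≤ a k := by
    intro k
    have h3 : 0 ≤ (if r ≤ 1 then 0 else (r / 2) ^ k / (k.factorial : ℝ)) := by
      split_ifs <;> positivity
    have : 0 ≤ r / 2 ^ k := by positivity
    simp only [ha]; linarith
  have hb : ∫⁻ ω, ENNReal.ofReal (X ω ^ p) ∂μ ≤ ENNReal.ofReal (r / 2 ^ n) := by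
    refine (H p hp hrp le_rfl).trans (ENNReal.ofReal_le_ofReal ?_)
    have e1 : p / (2 * Real.exp 1 * p) ≤ 1 / 2 := by
      have := Real.add_one_le_exp (1 : ℝ)
      rw [div_le_div_iff₀ (by positivity) (by norm_num)]
      nlinarith
    have e2 : (p / (2 * Real.exp 1 * p)) ^ p ≤ (1 / 2) ^ n := by
      calc (p / (2 * Real.exp 1 * p)) ^ p ≤ (1 / 2 : ℝ) ^ p :=
            Real.rpow_le_rpow (by positivity) e1 hp0.le
        _ ≤ (1 / 2 : ℝ) ^ (n : ℝ) :=
            Real.rpow_le_rpow_of_exponent_ge (by norm_num) (by norm_num) hn1.le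
        _ = (1 / 2) ^ n := Real.rpow_natCast _ _
    calc (p / (2 * Real.exp 1 * p)) ^ p * r ≤ (1 / 2) ^ n * r := by gcongr
      _ = r / 2 ^ n := by rw [div_pow, one_pow]; ring
  have hsum : 1 + ∑ k ∈ range n, a (k + 1) + r / 2 ^ n ≤ Real.exp r := by
    have g1 : ∑ k ∈ range n, r / 2 ^ (k + 1) + r / 2 ^ n = r := by
      clear_value a
      clear hn1 hn2 hb
      induction n with
      | zero => simp
      | succ n ih =>
        rw [Finset.sum_range_succ, ← ih.symm.symm]
        conv_rhs => rw [← ih]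
        rw [pow_succ]; ring
    simp only [ha, Finset.sum_add_distrib]
    by_cases hr1 : r ≤ 1
    · simp only [hr1, if_true, Finset.sum_const_zero]
      linarith [Real.add_one_le_exp r]
    · simp only [hr1, if_false]
      have g2 := Real.sum_le_exp_of_nonneg (x := r / 2) (by linarith) (n + 1)
      rw [Finset.sum_range_succ'] at g2
      simp only [pow_zero, Nat.factorial_zero, Nat.cast_one, div_one] at g2
      have := latala_exp r (by linarith)
      linarith
  have hT : ∀ ω, ENNReal.ofReal ((1 + X ω) ^ p) ≤
      1 + ∑ k ∈ range n, ENNReal.ofReal (p ^ (k + 1) / ((k + 1).factorial : ℝ) * X ω ^ (k + 1))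
        + ENNReal.ofReal (X ω ^ p) := by
    intro ω
    have hx := hX0 ω
    have h := latala_taylor n p (X ω) hn1 hn2 hx
    rw [Finset.sum_range_succ'] at h
    simp only [pow_zero, Nat.factorial_zero, Nat.cast_one, div_one, mul_one] at h
    refine (ENNReal.ofReal_le_ofReal h).trans ?_
    refine ENNReal.ofReal_add_le.trans ?_
    gcongr
    refine ENNReal.ofReal_add_le.trans ?_
    rw [add_comm, ENNReal.ofReal_one, ENNReal.ofReal_sum_of_nonneg]
    intro k _
    positivity
  calc ∫⁻ ω, ENNReal.ofReal ((1 + X ω) ^ p) ∂μ ≤ ∫⁻ ω, (1 + ∑ k ∈ range n, ENNReal.ofReal (p ^ (k + 1) / ((k + 1).factorial : ℝ) * X ω ^ (k + 1))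
        + ENNReal.ofReal (X ω ^ p)) ∂μ := lintegral_mono hT
    _ = 1 + ∑ k ∈ range n, ∫⁻ ω, ENNReal.ofReal (p ^ (k + 1) / ((k + 1).factorial : ℝ) * X ω ^ (k + 1)) ∂μ
        + ∫⁻ ω, ENNReal.ofReal (X ω ^ p) ∂μ := by
      rw [lintegral_add_left (by fun_prop), lintegral_add_left (by fun_prop),
        lintegral_finsetSum _ (fun k _ => by fun_prop)]
      simp
    _ ≤ 1 + ∑ k ∈ range n, ENNReal.ofReal (a (k + 1)) + ENNReal.ofReal (r / 2 ^ n) := by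
      gcongr with k hk
      have hk' : ((k + 1 : ℕ) : ℝ) ≤ n := by
        exact_mod_cast Finset.mem_range.1 hk
      exact latala_coeff μ X hX hX0 p r hp hr hrp H (k + 1) (by omega) (by linarith)
    _ = ENNReal.ofReal (1 + ∑ k ∈ range n, a (k + 1) + r / 2 ^ n) := by
      have hs0 : 0 ≤ ∑ k ∈ range n, a (k + 1) := Finset.sum_nonneg fun k _ => ha0 _
      rw [ENNReal.ofReal_add (by positivity) (by positivity), ENNReal.ofReal_add (by norm_num) hs0,
        ENNReal.ofReal_sum_of_nonneg (fun k _ => ha0 _), ENNReal.ofReal_one]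
    _ ≤ _ := ENNReal.ofReal_le_ofReal hsum

lemma latala_sum_le_prod {ι : Type*} (s : Finset ι) (f : ι → ℝ) (hf : ∀ i, 0 ≤ f i) :
    1 + ∑ i ∈ s, f i ≤ ∏ i ∈ s, (1 + f i) := by
  classical
  induction s using Finset.induction_on with
  | empty => simp
  | insert i s hi ih =>
    rw [Finset.sum_insert hi, Finset.prod_insert hi]
    have h1 := Finset.sum_nonneg (s := s) fun j _ => hf j
    nlinarith [hf i, mul_le_mul_of_nonneg_left ih (hf i), mul_nonneg (hf i) h1]

/-- Latała's moment inequality for sums of i.i.d. nonnegative random variables. -/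
theorem latala_moment_inequality {Ω : Type*} [MeasurableSpace Ω]
    (μ : Measure Ω) [IsProbabilityMeasure μ]
    (m : ℕ) (hm : 1 ≤ m)
    (Z : Ω → ℝ) (Zi : Fin m → Ω → ℝ)
    (hZmeas : Measurable Z) (hZimeas : ∀ i, Measurable (Zi i))
    (hZnn : ∀ ω, 0 ≤ Z ω) (hZinn : ∀ i ω, 0 ≤ Zi i ω)
    (hindep : iIndepFun Zi μ)
    (hident : ∀ i, IdentDistrib (Zi i) Z μ μ)
    (p : ℝ) (hp : 1 ≤ p) :
    lpNormR μ p (fun ω => ∑ i, Zi i ω) ≤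
      ENNReal.ofReal (2 * Real.exp 2) *
        ⨆ s ∈ Set.Icc (max 1 (p / m)) p,
          ENNReal.ofReal (p / s * ((m : ℝ) / p) ^ (1 / s)) * lpNormR μ s Z := by
  have hp0 : 0 < p := by linarith
  have hm1 : (1 : ℝ) ≤ m := by exact_mod_cast hm
  have hm0 : (0 : ℝ) < m := by linarith
  have hC : 0 < 2 * Real.exp 2 := by positivity
  have hC0 : ENNReal.ofReal (2 * Real.exp 2) ≠ 0 := by simpa using hC
  set B := ⨆ s ∈ Set.Icc (max 1 (p / m)) p,
          ENNReal.ofReal (p / s * ((m : ℝ) / p) ^ (1 / s)) * lpNormR μ s Z with hB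
  rw [mul_comm, ← ENNReal.div_le_iff hC0 ENNReal.ofReal_ne_top]
  refine le_of_forall_gt_imp_ge_of_dense fun c hc => ?_
  rcases eq_or_ne c ⊤ with rfl | hct
  · exact le_top
  rw [ENNReal.div_le_iff hC0 ENNReal.ofReal_ne_top]
  obtain ⟨b, hb, rfl⟩ : ∃ b : ℝ, 0 < b ∧ c = ENNReal.ofReal b :=
    ⟨c.toReal, ENNReal.toReal_pos (bot_le.trans_lt hc).ne' hct, (ENNReal.ofReal_toReal hct).symm⟩
  set r := p / m with hr
  have hr0 : 0 < r := by positivity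
  have hrp : r ≤ p := div_le_self hp0.le hm1
  set t := 2 * Real.exp 1 * b with ht
  have ht0 : 0 < t := by positivity
  have H : ∀ s, 1 ≤ s → r ≤ s → s ≤ p → ∫⁻ ω, ENNReal.ofReal ((Z ω / t) ^ s) ∂μ ≤
      ENNReal.ofReal ((s / (2 * Real.exp 1 * p)) ^ s * r) := by
    intro s hs1 hrs hsp
    have hs0 : 0 < s := by linarith
    have h1 : ENNReal.ofReal (p / s * ((m : ℝ) / p) ^ (1 / s)) * lpNormR μ s Z ≤ ENNReal.ofReal b := by
      refine le_trans ?_ hc.le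
      exact le_iSup₂ (f := fun s (_ : s ∈ Set.Icc (max 1 (p / m)) p) =>
        ENNReal.ofReal (p / s * ((m : ℝ) / p) ^ (1 / s)) * lpNormR μ s Z) s ⟨max_le hs1 hrs, hsp⟩
    have h2 := ENNReal.rpow_le_rpow h1 hs0.le
    unfold lpNormR at h2
    rw [ENNReal.mul_rpow_of_nonneg _ _ hs0.le, ← ENNReal.rpow_mul, one_div_mul_cancel hs0.ne',
      ENNReal.rpow_one, ENNReal.ofReal_rpow_of_nonneg (by positivity) hs0.le,
      ENNReal.ofReal_rpow_of_nonneg hb.le hs0.le, Real.mul_rpow (by positivity) (by positivity),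
      ← Real.rpow_mul (by positivity), one_div_mul_cancel hs0.ne', Real.rpow_one] at h2
    simp only [abs_of_nonneg (hZnn _)] at h2
    set K := (p / s) ^ s * ((m : ℝ) / p) with hK
    have hK0 : 0 < K := by positivity
    have h3 : ∀ ω, ENNReal.ofReal ((Z ω / t) ^ s) =
        ENNReal.ofReal ((t ^ s * K)⁻¹) * (ENNReal.ofReal K * ENNReal.ofReal (Z ω ^ s)) := by
      intro ω
      rw [← ENNReal.ofReal_mul hK0.le, ← ENNReal.ofReal_mul (by positivity),
        Real.div_rpow (hZnn ω) ht0.le]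
      congr 1
      have : t ^ s ≠ 0 := by positivity
      field_simp
    simp_rw [h3]
    rw [lintegral_const_mul _ (by fun_prop), lintegral_const_mul _ (by fun_prop)]
    refine (mul_le_mul_right h2 _).trans ?_
    rw [← ENNReal.ofReal_mul (by positivity)]
    apply ENNReal.ofReal_le_ofReal
    apply le_of_eq
    rw [hK, ht, hr, Real.mul_rpow (by positivity) hb.le, Real.div_rpow hp0.le hs0.le,
      Real.div_rpow hs0.le (by positivity), Real.mul_rpow (by positivity) hp0.le]
    have g1 : b ^ s ≠ 0 := by positivity
    have g2 : s ^ s ≠ 0 := by positivity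
    have g3 : p ^ s ≠ 0 := by positivity
    have g4 : (2 * Real.exp 1) ^ s ≠ 0 := by positivity
    field_simp
  have hone := latala_onevar μ (fun ω => Z ω / t) (by fun_prop)
    (fun ω => div_nonneg (hZnn ω) ht0.le) p r hp hr0 hrp H
  have hmeas : Measurable (fun z : ℝ => ENNReal.ofReal ((1 + z / t) ^ p)) := by fun_prop
  have hone' : ∀ i, ∫⁻ ω, ENNReal.ofReal ((1 + Zi i ω / t) ^ p) ∂μ ≤ ENNReal.ofReal (Real.exp r) := by
    intro i
    refine le_trans (le_of_eq ?_) hone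
    exact ((hident i).comp hmeas).lintegral_eq
  have hprod : ∫⁻ ω, ∏ i, ENNReal.ofReal ((1 + Zi i ω / t) ^ p) ∂μ
      = ∏ i, ∫⁻ ω, ENNReal.ofReal ((1 + Zi i ω / t) ^ p) ∂μ :=
    lintegral_prod_eq_prod_lintegral_of_indepFun Finset.univ
      (fun i ω => ENNReal.ofReal ((1 + Zi i ω / t) ^ p))
      (hindep.comp (fun _ z => ENNReal.ofReal ((1 + z / t) ^ p)) fun _ => hmeas)
      (fun i => hmeas.comp (hZimeas i))
  have hpt : ∀ ω, ENNReal.ofReal (|∑ i, Zi i ω| ^ p) ≤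
      ENNReal.ofReal (t ^ p) * ∏ i, ENNReal.ofReal ((1 + Zi i ω / t) ^ p) := by
    intro ω
    have h0 : ∀ i, 0 ≤ Zi i ω / t := fun i => div_nonneg (hZinn i ω) ht0.le
    have h00 : ∀ i, 0 ≤ 1 + Zi i ω / t := fun i => by linarith [h0 i]
    have hS : 0 ≤ ∑ i, Zi i ω := Finset.sum_nonneg fun i _ => hZinn i ω
    rw [← ENNReal.ofReal_prod_of_nonneg (fun i _ => Real.rpow_nonneg (h00 i) p),
      ← ENNReal.ofReal_mul (by positivity), Real.finsetProd_rpow _ _ (fun i _ => h00 i),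
      ← Real.mul_rpow ht0.le (Finset.prod_nonneg fun i _ => h00 i), abs_of_nonneg hS]
    apply ENNReal.ofReal_le_ofReal
    apply Real.rpow_le_rpow hS _ hp0.le
    have h1 := latala_sum_le_prod Finset.univ (fun i => Zi i ω / t) h0
    rw [← Finset.sum_div] at h1
    have h2 : (∑ i, Zi i ω) / t ≤ ∏ i, (1 + Zi i ω / t) := by linarith
    rw [div_le_iff₀ ht0] at h2
    linarith
  have hfin : ∫⁻ ω, ENNReal.ofReal (|∑ i, Zi i ω| ^ p) ∂μ ≤ ENNReal.ofReal ((t * Real.exp 1) ^ p) := by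
    calc ∫⁻ ω, ENNReal.ofReal (|∑ i, Zi i ω| ^ p) ∂μ
        ≤ ∫⁻ ω, ENNReal.ofReal (t ^ p) * ∏ i, ENNReal.ofReal ((1 + Zi i ω / t) ^ p) ∂μ :=
          lintegral_mono hpt
      _ = ENNReal.ofReal (t ^ p) * ∏ i, ∫⁻ ω, ENNReal.ofReal ((1 + Zi i ω / t) ^ p) ∂μ := by
          rw [lintegral_const_mul' _ _ ENNReal.ofReal_ne_top, hprod]
      _ ≤ ENNReal.ofReal (t ^ p) * ∏ _i : Fin m, ENNReal.ofReal (Real.exp r) := by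
          gcongr with i
          exact hone' i
      _ = ENNReal.ofReal ((t * Real.exp 1) ^ p) := by
          rw [Finset.prod_const, Finset.card_univ, Fintype.card_fin,
            ← ENNReal.ofReal_pow (Real.exp_pos _).le, ← ENNReal.ofReal_mul (by positivity),
            ← Real.exp_nat_mul, Real.mul_rpow ht0.le (Real.exp_pos _).le, ← Real.exp_mul, one_mul,
            hr, mul_div_cancel₀ _ hm0.ne']
  unfold lpNormR
  rw [one_div, ENNReal.rpow_inv_le_iff hp0, ← ENNReal.ofReal_mul hb.le,
    ENNReal.ofReal_rpow_of_nonneg (by positivity) hp0.le]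
  refine hfin.trans (le_of_eq ?_)
  congr 2
  rw [ht, show (2 : ℝ) = 1 + 1 by norm_num, Real.exp_add]
  ring
end
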